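/- Let φ be a Schwartz function on ℝ with supp φ̂ ⊆ (0,1) which is non-degenerate, i.e. ∫_{−∞}^{0} e^{2πit} φ(t) dt ≠ 0; let ψ be a Schwartz function with ψ̂ ≡ 1 on [1, 3/2]; set h(u) = e^{2πiu} 𝟙_{[0,∞)}(u), f₀ = h∗ψ, and for m ∈ ℤ, φ_m(x) = 2^m e^{2πi(1+2^m)x} φ(2^m x). Then: (a) f₀ is bounded and Lipschitz (hence has finite Hölder seminorm of every order s ∈ (0,1)); (b) (f₀∗φ_m)(0) = ∫_{−∞}^{0} e^{2πit} φ(t) dt for every m ≤ −2, and consequently Σ_{m ≤ −2} |(f₀∗φ_m)(0)|² = ∞. In particular, the Rubio de Francia operator without rotations associated with the collection {[1+2^m, 1+2^{m+1}]}_{m ≤ −2} does not map f₀ to an ℓ²-valued function, so it is not bounded on the homogeneous Hölder space Ċ^s. -/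

import Mathlib

/-!
Convolving with the modulated Heaviside function is a modulated primitive,
`(h ∗ f)(x) = e^{2πix} ∫_{-∞}^x e^{-2πiu} f(u) du`, which is bounded and Lipschitz when `f` is
integrable and bounded. For `m ≤ -2` the Fourier transform of `φ_m` lives in
`[1 + 2^m, 1 + 2^{m+1}] ⊆ [1, 3/2]`, where `𝓕ψ = 1`, so `ψ ∗ φ_m = φ_m` almost everywhere and
`f₀ ∗ φ_m = h ∗ (ψ ∗ φ_m) = h ∗ φ_m`. At `0` this is a primitive whose value does not depend on
`m`, because `e^{-2πiu} φ_m(u) = 2^m G(2^m u)` with `G(t) = e^{2πit} φ(t)`; a nonzero constant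
is not square summable.
-/

open MeasureTheory Real Set Function
open scoped FourierTransform ENNReal NNReal

/-- `e2pi t = e^{2πit}`. -/
noncomputable def e2pi (t : ℝ) : ℂ := Complex.exp (2 * (Real.pi : ℂ) * Complex.I * (t : ℂ))

/-- Convolution of two functions on `ℝ`. -/
noncomputable def conv (f g : ℝ → ℂ) (x : ℝ) : ℂ := ∫ t, f t * g (x - t)

/-- The modulated Heaviside function `h(u) = e^{2πiu} 𝟙_{[0,∞)}(u)`. -/
noncomputable def heav : ℝ → ℂ := Set.indicator (Set.Ici (0:ℝ)) fun u => e2pi u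

/-- The function `φ_m` associated with the dyadic interval `[1+2^m, 1+2^{m+1}]`:
`φ_m(x) = 2^m e^{2πi(1+2^m)x} φ(2^m x)`. -/
noncomputable def phimDyadic (φ : ℝ → ℂ) (m : ℤ) (x : ℝ) : ℂ :=
  (((2:ℝ) ^ m : ℝ) : ℂ) * e2pi ((1 + (2:ℝ) ^ m) * x) * φ ((2:ℝ) ^ m * x)

lemma e2pi_eq_fourierChar (t : ℝ) : e2pi t = 𝐞 t := by
  rw [Real.fourierChar_apply, e2pi]
  congr 1
  push_cast
  ring

lemma e2pi_add (a b : ℝ) : e2pi (a + b) = e2pi a * e2pi b := by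
  simp only [e2pi_eq_fourierChar, AddChar.map_add_eq_mul, Circle.coe_mul]

lemma norm_e2pi (t : ℝ) : ‖e2pi t‖ = 1 := by
  rw [e2pi_eq_fourierChar, Circle.norm_coe]

lemma continuous_e2pi : Continuous e2pi := by
  unfold e2pi
  fun_prop

lemma norm_e2pi_sub_e2pi_le (x y : ℝ) : ‖e2pi x - e2pi y‖ ≤ 2 * π * |x - y| := by
  have e2pi_eq_circleMap (t : ℝ) : e2pi t = circleMap 0 1 (2 * π * t) := by
    simp [e2pi, circleMap, mul_right_comm]
  have hlip := (lipschitzWith_circleMap 0 1).norm_sub_le (2 * π * x) (2 * π * y)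
  simpa [e2pi_eq_circleMap, ← mul_sub, abs_mul, abs_of_pos pi_pos] using hlip

lemma integrable_e2pi_comp_mul {u : ℝ → ℝ} {f : ℝ → ℂ} (hu : Continuous u)
    (hf : Integrable f) : Integrable fun t => e2pi (u t) * f t :=
  hf.bdd_mul (continuous_e2pi.comp hu).aestronglyMeasurable
    (.of_forall fun t => (norm_e2pi (u t)).le)

lemma fourier_eq_integral_e2pi (f : ℝ → ℂ) (ξ : ℝ) : 𝓕 f ξ = ∫ t, e2pi (-(t * ξ)) * f t := by
  simp only [Real.fourier_real_eq, Circle.smul_def, smul_eq_mul, e2pi_eq_fourierChar]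

lemma ae_eq_of_fourier_eq {V E : Type*} [NormedAddCommGroup V] [InnerProductSpace ℝ V]
    [FiniteDimensional ℝ V] [MeasurableSpace V] [BorelSpace V] [NormedAddCommGroup E]
    [NormedSpace ℂ E] [CompleteSpace E] {f g : V → E} (hf : Integrable f) (hg : Integrable g)
    (hfg : 𝓕 f = 𝓕 g) : f =ᵐ[volume] g := by
  have integral_fourier_smul (k : SchwartzMap V ℂ) {f : V → E} (hf : Integrable f) :
      ∫ x, 𝓕 k x • f x = ∫ ξ, k ξ • 𝓕 f ξ := by
    simpa using! VectorFourier.integral_fourierIntegral_smul_eq_flip (L := innerₗ V)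
      Real.continuous_fourierChar continuous_inner k.integrable hf
  refine ae_eq_of_integral_contDiff_smul_eq hf.locallyIntegrable hg.locallyIntegrable
    fun u hu hu_supp => ?_
  -- A test function is the Fourier transform of a Schwartz function, so duality moves the
  -- transform onto `f` and `g`.
  have hu_supp' : HasCompactSupport (Complex.ofRealCLM ∘ u) := hu_supp.comp_left rfl
  let k : SchwartzMap V ℂ := hu_supp'.toSchwartzMap (by fun_prop)
  have smul_eq_fourier_smul (x : V) (e : E) : u x • e = 𝓕 (𝓕⁻ k) x • e := by
    simp [k]
  simp only [smul_eq_fourier_smul]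
  rw [integral_fourier_smul _ hf, integral_fourier_smul _ hg, hfg]

section Convolution

open scoped Convolution

lemma conv_eq_convolution (f g : ℝ → ℂ) : conv f g = f ⋆[ContinuousLinearMap.mul ℂ ℂ] g := rfl

lemma conv_congr_ae_right (f : ℝ → ℂ) {g g' : ℝ → ℂ} (hg : g =ᵐ[volume] g') :
    conv f g = conv f g' :=
  convolution_congr (.mul ℂ ℂ) .rfl hg

lemma conv_conv_of_bounded {f g k : ℝ → ℂ} {C : ℝ} (hf : AEStronglyMeasurable f)
    (hfC : ∀ᵐ t, ‖f t‖ ≤ C) (hg : Integrable g) (hk : Integrable k) :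
    conv (conv f g) k = conv f (conv g k) := by
  funext x
  have exists_conv_bounded {F : ℝ → ℂ} (hF : Integrable F) (y : ℝ) :
      ConvolutionExistsAt f F y (.mul ℂ ℂ) volume := by
    rw [ConvolutionExistsAt]
    exact (hF.comp_sub_left y).bdd_mul hf hfC
  refine convolution_assoc (.mul ℂ ℂ) (.mul ℂ ℂ) (.mul ℂ ℂ) (.mul ℂ ℂ) mul_assoc hf hg.1 hk.1
    (.of_forall (exists_conv_bounded hg)) (hg.norm.ae_convolution_exists _ hk.norm) ?_
  exact ((hg.norm.integrable_convolution (.mul ℝ ℝ) hk.norm).comp_sub_left x).bdd_mul hf.norm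
    (hfC.mono fun t ht => (norm_norm (f t)).trans_le ht)

lemma conv_ae_eq_right_of_fourier_eq_one {f g : ℝ → ℂ} (hf : Integrable f) (hg : Integrable g)
    (h : ∀ ξ ∈ support (𝓕 g), 𝓕 f ξ = 1) : conv f g =ᵐ[volume] g := by
  refine ae_eq_of_fourier_eq (hf.integrable_convolution (.mul ℂ ℂ) hg) hg (funext fun ξ => ?_)
  rw [conv_eq_convolution, Real.fourier_mul_convolution_eq hf hg]
  by_cases hξ : 𝓕 g ξ = 0
  · rw [hξ, mul_zero]
  · rw [h ξ hξ, one_mul]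

end Convolution

lemma measurable_heav : Measurable heav :=
  continuous_e2pi.measurable.indicator measurableSet_Ici

lemma norm_heav_le_one (t : ℝ) : ‖heav t‖ ≤ 1 :=
  (norm_indicator_le_norm_self _ t).trans (norm_e2pi t).le

lemma conv_heav_eq (f : ℝ → ℂ) (x : ℝ) :
    conv heav f x = e2pi x * ∫ u in Iic x, e2pi (-u) * f u := by
  rw [conv, ← integral_sub_left_eq_self _ volume x, ← integral_indicator measurableSet_Iic,
    ← integral_const_mul]
  refine integral_congr_ae (.of_forall fun u => ?_)
  by_cases hu : u ≤ x
  · simp [heav, hu, sub_eq_add_neg x u, e2pi_add, mul_assoc]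
  · simp [heav, hu]

lemma norm_setIntegral_e2pi_mul_le {f : ℝ → ℂ} (hf : Integrable f) (u : ℝ → ℝ) (s : Set ℝ) :
    ‖∫ t in s, e2pi (u t) * f t‖ ≤ ∫ t, ‖f t‖ := by
  refine (norm_integral_le_integral_norm _).trans ?_
  simp only [norm_mul, norm_e2pi, one_mul]
  exact setIntegral_le_integral hf.norm (.of_forall fun t => norm_nonneg (f t))

lemma norm_conv_heav_le {f : ℝ → ℂ} (hf : Integrable f) (x : ℝ) :
    ‖conv heav f x‖ ≤ ∫ t, ‖f t‖ := by
  rw [conv_heav_eq, norm_mul, norm_e2pi, one_mul]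
  exact norm_setIntegral_e2pi_mul_le hf _ _

lemma norm_integral_Iic_sub_integral_Iic_le {E : Type*} [NormedAddCommGroup E] [NormedSpace ℝ E]
    {f : ℝ → E} {C : ℝ} (hf : Integrable f) (hfC : ∀ᵐ t, ‖f t‖ ≤ C) (x y : ℝ) :
    ‖(∫ t in Iic x, f t) - ∫ t in Iic y, f t‖ ≤ C * |x - y| := by
  rw [intervalIntegral.integral_Iic_sub_Iic hf.integrableOn hf.integrableOn]
  exact intervalIntegral.norm_integral_le_of_norm_le_const_ae (hfC.mono fun _ ht _ => ht)

lemma norm_conv_heav_sub_conv_heav_le {f : ℝ → ℂ} {C : ℝ} (hf : Integrable f)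
    (hfC : ∀ᵐ t, ‖f t‖ ≤ C) (x y : ℝ) :
    ‖conv heav f x - conv heav f y‖ ≤ (C + 2 * π * ∫ t, ‖f t‖) * |x - y| := by
  let P (z : ℝ) : ℂ := ∫ u in Iic z, e2pi (-u) * f u
  have hP_lip : ‖P x - P y‖ ≤ C * |x - y| :=
    norm_integral_Iic_sub_integral_Iic_le (integrable_e2pi_comp_mul continuous_neg hf)
      (by simpa only [norm_mul, norm_e2pi, one_mul] using hfC) x y
  have hP_bdd : ‖P y‖ ≤ ∫ t, ‖f t‖ := norm_setIntegral_e2pi_mul_le hf _ _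
  calc ‖conv heav f x - conv heav f y‖
      = ‖e2pi x * (P x - P y) + (e2pi x - e2pi y) * P y‖ := by
        rw [conv_heav_eq, conv_heav_eq]
        congr 1
        ring
    _ ≤ ‖P x - P y‖ + ‖e2pi x - e2pi y‖ * ‖P y‖ := by
        simpa only [norm_mul, norm_e2pi, one_mul] using
          norm_add_le (e2pi x * (P x - P y)) ((e2pi x - e2pi y) * P y)
    _ ≤ C * |x - y| + 2 * π * |x - y| * ∫ t, ‖f t‖ := by
        gcongr
        exact norm_e2pi_sub_e2pi_le x y
    _ = (C + 2 * π * ∫ t, ‖f t‖) * |x - y| := by ring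

lemma conv_conv_heav_eq_of_fourier_eq_one {f g : ℝ → ℂ} (hf : Integrable f) (hg : Integrable g)
    (h : ∀ ξ ∈ support (𝓕 g), 𝓕 f ξ = 1) : conv (conv heav f) g = conv heav g := by
  rw [conv_conv_of_bounded measurable_heav.aestronglyMeasurable (.of_forall norm_heav_le_one) hf hg,
    conv_congr_ae_right heav (conv_ae_eq_right_of_fourier_eq_one hf hg h)]

lemma integrable_phimDyadic {φ : ℝ → ℂ} (hφ : Integrable φ) (m : ℤ) :
    Integrable (phimDyadic φ m) := by
  have hdil : Integrable fun x => φ ((2 : ℝ) ^ m * x) := hφ.comp_mul_left' (by positivity)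
  unfold phimDyadic
  simpa only [mul_assoc] using
    (integrable_e2pi_comp_mul (continuous_const_mul (1 + (2 : ℝ) ^ m)) hdil).const_mul
      (((2 : ℝ) ^ m : ℝ) : ℂ)

lemma e2pi_neg_mul_phimDyadic (φ : ℝ → ℂ) (m : ℤ) (x : ℝ) :
    e2pi (-x) * phimDyadic φ m x =
      (2 : ℝ) ^ m • (e2pi ((2 : ℝ) ^ m * x) * φ ((2 : ℝ) ^ m * x)) := by
  have hphase : e2pi ((2 : ℝ) ^ m * x) = e2pi (-x) * e2pi ((1 + (2 : ℝ) ^ m) * x) := by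
    rw [← e2pi_add]
    ring_nf
  rw [hphase, phimDyadic, Complex.real_smul]
  ring

lemma conv_heav_phimDyadic_zero (φ : ℝ → ℂ) (m : ℤ) :
    conv heav (phimDyadic φ m) 0 = ∫ t in Iic (0 : ℝ), e2pi t * φ t := by
  have h2m : (0 : ℝ) < 2 ^ m := by positivity
  have hdil := Measure.setIntegral_comp_smul_of_pos volume (fun t => e2pi t * φ t) (Iic 0) h2m
  simp only [smul_eq_mul, LinearOrderedField.smul_Iic h2m, mul_zero, Module.finrank_self,
    pow_one] at hdil
  simp only [conv_heav_eq, e2pi_neg_mul_phimDyadic]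
  rw [integral_smul, hdil, smul_inv_smul₀ h2m.ne']
  simp [e2pi]

lemma fourier_phimDyadic (φ : ℝ → ℂ) (m : ℤ) (ξ : ℝ) :
    𝓕 (phimDyadic φ m) ξ = 𝓕 φ ((ξ - 1 - 2 ^ m) / 2 ^ m) := by
  have h2m : (0 : ℝ) < 2 ^ m := by positivity
  let F (t : ℝ) : ℂ := e2pi (-(t * ((ξ - 1 - 2 ^ m) / 2 ^ m))) * φ t
  have hF (t : ℝ) : e2pi (-(t * ξ)) * phimDyadic φ m t = (2 : ℝ) ^ m • F (2 ^ m * t) := by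
    have hphase : -((2 : ℝ) ^ m * t * ((ξ - 1 - 2 ^ m) / 2 ^ m)) =
        -(t * ξ) + (1 + 2 ^ m) * t := by
      field_simp
      ring
    simp only [F, hphase, e2pi_add, phimDyadic, Complex.real_smul]
    ring
  simp only [fourier_eq_integral_e2pi, hF]
  rw [integral_smul, Measure.integral_comp_mul_left, abs_of_pos (inv_pos.2 h2m),
    smul_inv_smul₀ h2m.ne']

lemma support_fourier_phimDyadic_subset {φ : ℝ → ℂ} (hφ : support (𝓕 φ) ⊆ Icc 0 1) (m : ℤ) :
    support (𝓕 (phimDyadic φ m)) ⊆ Icc (1 + 2 ^ m) (1 + 2 ^ (m + 1)) := by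
  intro ξ hξ
  rw [mem_support, fourier_phimDyadic] at hξ
  have h2m : (0 : ℝ) < 2 ^ m := by positivity
  obtain ⟨h0, h1⟩ := hφ hξ
  rw [le_div_iff₀ h2m] at h0
  rw [div_le_iff₀ h2m] at h1
  rw [mem_Icc, zpow_add_one₀ two_ne_zero]
  constructor <;> linarith

lemma Icc_one_add_two_zpow_subset {m : ℤ} (hm : m ≤ -2) :
    Icc (1 + 2 ^ m) (1 + 2 ^ (m + 1)) ⊆ Icc (1 : ℝ) (3 / 2) := by
  have hhalf : (2 : ℝ) ^ (m + 1) ≤ 2 ^ (-1 : ℤ) :=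
    zpow_le_zpow_right₀ one_le_two (by lia)
  refine Icc_subset_Icc (le_add_of_nonneg_right (by positivity)) ?_
  norm_num at hhalf
  linarith

lemma conv_conv_heav_phimDyadic_zero {φ ψ : ℝ → ℂ} (hφ : Integrable φ)
    (hφ_supp : support (𝓕 φ) ⊆ Icc 0 1) (hψ : Integrable ψ)
    (hψ_one : ∀ ξ ∈ Icc (1 : ℝ) (3 / 2), 𝓕 ψ ξ = 1) {m : ℤ} (hm : m ≤ -2) :
    conv (conv heav ψ) (phimDyadic φ m) 0 = ∫ t in Iic (0 : ℝ), e2pi t * φ t := by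
  have hψ_support : ∀ ξ ∈ support (𝓕 (phimDyadic φ m)), 𝓕 ψ ξ = 1 := fun ξ hξ =>
    hψ_one ξ (Icc_one_add_two_zpow_subset hm (support_fourier_phimDyadic_subset hφ_supp m hξ))
  rw [conv_conv_heav_eq_of_fourier_eq_one hψ (integrable_phimDyadic hφ m) hψ_support,
    conv_heav_phimDyadic_zero]

theorem statement16_general {φ ψ : ℝ → ℂ} {C : ℝ} (hφ : Integrable φ)
    (hφ_supp : support (𝓕 φ) ⊆ Icc 0 1) (hnd : (∫ t in Iic (0 : ℝ), e2pi t * φ t) ≠ 0)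
    (hψ : Integrable ψ) (hψ_bdd : ∀ᵐ t, ‖ψ t‖ ≤ C)
    (hψ_one : ∀ ξ ∈ Icc (1 : ℝ) (3 / 2), 𝓕 ψ ξ = 1) :
    ((∃ M : ℝ, ∀ x : ℝ, ‖conv heav ψ x‖ ≤ M) ∧
      ∃ L : ℝ, ∀ x y : ℝ, ‖conv heav ψ x - conv heav ψ y‖ ≤ L * |x - y|) ∧
    (∀ m : ℤ, m ≤ -2 →
        conv (conv heav ψ) (phimDyadic φ m) 0 = ∫ t in Iic (0 : ℝ), e2pi t * φ t) ∧
      (∑' m : {m : ℤ // m ≤ -2},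
        (‖conv (conv heav ψ) (phimDyadic φ (m : ℤ)) 0‖₊ : ℝ≥0∞) ^ 2) = ∞ := by
  have hconst (m : ℤ) (hm : m ≤ -2) := conv_conv_heav_phimDyadic_zero hφ hφ_supp hψ hψ_one hm
  refine ⟨⟨⟨_, norm_conv_heav_le hψ⟩, _, norm_conv_heav_sub_conv_heav_le hψ hψ_bdd⟩, hconst, ?_⟩
  have : Infinite {m : ℤ // m ≤ -2} := (Iic_infinite (-2 : ℤ)).to_subtype
  rw [tsum_congr fun m : {m : ℤ // m ≤ -2} => by rw [hconst m m.2]]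
  exact ENNReal.tsum_const_eq_top_of_ne_zero (by simpa using hnd)

/-- let `φ` be a non-degenerate Schwartz function with `supp 𝓕φ ⊆ (0,1)`, `ψ`
Schwartz with `𝓕ψ ≡ 1` on `[1,3/2]`, and `f₀ = h∗ψ`. Then (a) `f₀` is bounded and Lipschitz,
and (b) `(f₀∗φ_m)(0) = ∫_{-∞}^0 e^{2πit} φ(t) dt` for every `m ≤ -2`, so that
`Σ_{m ≤ -2} |(f₀∗φ_m)(0)|² = ∞`. -/
theorem statement16 (φ : SchwartzMap ℝ ℂ)
    (hφ : Function.support (𝓕 ⇑φ) ⊆ Set.Ioo 0 1)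
    (hnd : (∫ t in Set.Iic (0:ℝ), e2pi t * φ t) ≠ 0)
    (ψ : SchwartzMap ℝ ℂ) (hψ : ∀ ξ ∈ Set.Icc (1:ℝ) (3/2), 𝓕 ⇑ψ ξ = 1) :
    ((∃ M : ℝ, ∀ x : ℝ, ‖conv heav ⇑ψ x‖ ≤ M) ∧
      ∃ L : ℝ, ∀ x y : ℝ, ‖conv heav ⇑ψ x - conv heav ⇑ψ y‖ ≤ L * |x - y|) ∧
    (∀ m : ℤ, m ≤ -2 →
        conv (conv heav ⇑ψ) (phimDyadic ⇑φ m) 0 = ∫ t in Set.Iic (0:ℝ), e2pi t * φ t) ∧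
      (∑' m : {m : ℤ // m ≤ -2},
        (‖conv (conv heav ⇑ψ) (phimDyadic ⇑φ (m : ℤ)) 0‖₊ : ℝ≥0∞) ^ 2) = ∞ := by
  have hψ_bdd := ae_of_all volume ψ.toBoundedContinuousFunction.norm_coe_le_norm
  exact statement16_general φ.integrable (hφ.trans Ioo_subset_Icc_self) hnd ψ.integrable hψ_bdd hψ
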